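/- Let n ≥ 2, a ∈ 𝔹ⁿ \ {0}, c > 0, and let σ_a be the inversion in the sphere S^{n−1}(a*, r). Then for all x, y ∈ 𝔹ⁿ \ {0}: log(1 + c·|σ_a(x) − σ_a(y)| / √((1 − |σ_a(x)|)(1 − |σ_a(y)|))) ≤ (1 + |a|) · h_{𝔹ⁿ\{0},c}(x, y). -/

import Mathlib

noncomputable section

open Real Filter

/-- The hyperbolic-type metric `h_{𝔹ⁿ,c}` on the unit ball. -/
def hB {n : ℕ} (c : ℝ) (x y : EuclideanSpace ℝ (Fin n)) : ℝ :=
  Real.log (1 + c * ‖x - y‖ / Real.sqrt ((1 - ‖x‖) * (1 - ‖y‖)))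

/-- The n-th (last) coordinate of a point of `ℝⁿ`. -/
def lastCoord {n : ℕ} (x : EuclideanSpace ℝ (Fin n)) : ℝ :=
  if h : 0 < n then x ⟨n - 1, Nat.sub_lt h one_pos⟩ else 0

/-- The hyperbolic-type metric `h_{ℍⁿ,c}` on the upper half space. -/
def hH {n : ℕ} (c : ℝ) (x y : EuclideanSpace ℝ (Fin n)) : ℝ :=
  Real.log (1 + c * ‖x - y‖ / Real.sqrt (lastCoord x * lastCoord y))

/-- The hyperbolic-type metric `h_{𝔹ⁿ\{p},c}` on the punctured unit ball. -/
def hP {n : ℕ} (c : ℝ) (p x y : EuclideanSpace ℝ (Fin n)) : ℝ :=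
  Real.log (1 + c * ‖x - y‖ /
    Real.sqrt (min ‖x - p‖ (1 - ‖x‖) * min ‖y - p‖ (1 - ‖y‖)))

/-- The inversion `σ_a` in the sphere `S^{n-1}(a*, r)`, `a* = a/|a|²`, `r² = 1/|a|² - 1`. -/
def sigmaInv {n : ℕ} (a x : EuclideanSpace ℝ (Fin n)) : EuclideanSpace ℝ (Fin n) :=
  (‖a‖ ^ 2)⁻¹ • a +
    (((‖a‖ ^ 2)⁻¹ - 1) / ‖x - (‖a‖ ^ 2)⁻¹ • a‖ ^ 2) • (x - (‖a‖ ^ 2)⁻¹ • a)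

/-- The last standard basis vector `eₙ` of `ℝⁿ`. -/
def eLast (n : ℕ) : EuclideanSpace ℝ (Fin n) :=
  if h : 0 < n then EuclideanSpace.single ⟨n - 1, Nat.sub_lt h one_pos⟩ 1 else 0

/-- The first standard basis vector `e₁` of `ℝⁿ`. -/
def eFirst (n : ℕ) : EuclideanSpace ℝ (Fin n) :=
  if h : 0 < n then EuclideanSpace.single ⟨0, h⟩ 1 else 0

/-- The inversion `σ` in the sphere `S^{n-1}(-eₙ, √2)`, mapping `𝔹ⁿ` onto `ℍⁿ`. -/
def sigmaBH {n : ℕ} (x : EuclideanSpace ℝ (Fin n)) : EuclideanSpace ℝ (Fin n) :=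
  -eLast n + (2 / ‖x + eLast n‖ ^ 2) • (x + eLast n)

/-!
The sphere `S(p, R)` is orthogonal to the unit sphere exactly when `R² = ‖p‖² - 1`; for `p = a*`
this `R` is the radius `r` of `σ_a`, and `‖p‖⁻¹ = ‖a‖`. For the inversion `σ` in such a sphere,
`‖x - p‖² (1 - ‖σ x‖²) = R² (1 - ‖x‖²)`, and estimating `‖x - p‖ ≤ ‖p‖ + ‖x‖` here gives
`1 + ‖σ x‖ ≤ (1 + ‖p‖⁻¹) (1 + ‖x‖)`. Dividing, `1 - ‖σ x‖` is at least
`R² (1 - ‖x‖) / ((1 + ‖p‖⁻¹) ‖x - p‖²)`. Since `σ` stretches the distance of `x` and `y` by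
`R² / (‖x - p‖ ‖y - p‖)`, the quotient inside the logarithm grows by a factor of at most
`1 + ‖p‖⁻¹`, which Bernoulli's inequality moves in front of the logarithm. Finally, puncturing the
ball only increases the metric.
-/

open EuclideanGeometry

lemma log_one_add_mul_le {k t : ℝ} (hk : 1 ≤ k) (ht : 0 ≤ t) :
    log (1 + k * t) ≤ k * log (1 + t) := by
  rw [← log_rpow (by positivity)]
  exact log_le_log (by positivity) (one_add_mul_self_le_rpow_one_add (by linarith) hk)

section OrthogonalSphere

variable {E : Type*} [NormedAddCommGroup E] [InnerProductSpace ℝ E] {p x y : E} {R : ℝ}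

lemma sq_norm_sub_mul_one_sub_sq_norm_inversion (hR : R ^ 2 = ‖p‖ ^ 2 - 1) (hxp : x ≠ p) :
    ‖x - p‖ ^ 2 * (1 - ‖inversion p R x‖ ^ 2) = R ^ 2 * (1 - ‖x‖ ^ 2) := by
  have hd : ‖x - p‖ ≠ 0 := norm_ne_zero_iff.mpr (sub_ne_zero.mpr hxp)
  have hx : ‖x‖ ^ 2 = ‖x - p‖ ^ 2 + 2 * inner ℝ (x - p) p + ‖p‖ ^ 2 := by
    rw [← norm_add_sq_real, sub_add_cancel]
  have hσ : ‖inversion p R x‖ ^ 2 =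
      (R / ‖x - p‖) ^ 4 * ‖x - p‖ ^ 2 + 2 * ((R / ‖x - p‖) ^ 2 * inner ℝ (x - p) p) + ‖p‖ ^ 2 := by
    rw [inversion, dist_eq_norm, vsub_eq_sub, vadd_eq_add, norm_add_sq_real, norm_smul,
      real_inner_smul_left, norm_pow, norm_eq_abs, sq_abs]
    ring
  have hp : ‖p‖ ^ 2 = R ^ 2 + 1 := by linarith
  rw [hσ, hx, hp]
  field_simp
  ring

lemma norm_inversion_lt_one (hR : R ^ 2 = ‖p‖ ^ 2 - 1) (hp : 1 < ‖p‖) (hx : ‖x‖ < 1) :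
    ‖inversion p R x‖ < 1 := by
  have hxp : x ≠ p := ne_of_apply_ne norm (hx.trans hp).ne
  have hR_pos : 0 < R ^ 2 := hR ▸ sub_pos.mpr (one_lt_pow₀ hp two_ne_zero)
  have hx_sq : 0 < 1 - ‖x‖ ^ 2 := sub_pos.mpr (pow_lt_one₀ (norm_nonneg x) hx two_ne_zero)
  have hσ_sq : 0 < 1 - ‖inversion p R x‖ ^ 2 := by
    refine pos_of_mul_pos_right ?_ (sq_nonneg ‖x - p‖)
    rw [sq_norm_sub_mul_one_sub_sq_norm_inversion hR hxp]
    positivity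
  exact (sq_lt_one_iff₀ (norm_nonneg _)).mp (sub_pos.mp hσ_sq)

lemma norm_inversion_le (hR : R ^ 2 = ‖p‖ ^ 2 - 1) (hp : 1 < ‖p‖) (hx : ‖x‖ < 1) :
    ‖inversion p R x‖ ≤ (1 + ‖p‖ * ‖x‖) / (‖p‖ + ‖x‖) := by
  have hxp : x ≠ p := ne_of_apply_ne norm (hx.trans hp).ne
  have hσ := norm_inversion_lt_one hR hp hx
  have hsum : 0 < ‖p‖ + ‖x‖ := by positivity
  have hσ_sq : 0 ≤ 1 - ‖inversion p R x‖ ^ 2 :=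
    sub_nonneg.mpr (pow_le_one₀ (norm_nonneg _) hσ.le)
  have hdist : ‖x - p‖ ≤ ‖p‖ + ‖x‖ := (norm_sub_le x p).trans_eq (add_comm _ _)
  rw [le_div_iff₀ hsum]
  refine (sq_le_sq₀ (by positivity) (by positivity)).mp ?_
  have hcompare := calc
    (‖p‖ + ‖x‖) ^ 2 - (1 + ‖p‖ * ‖x‖) ^ 2 = R ^ 2 * (1 - ‖x‖ ^ 2) := by rw [hR]; ring
    _ = ‖x - p‖ ^ 2 * (1 - ‖inversion p R x‖ ^ 2) :=
      (sq_norm_sub_mul_one_sub_sq_norm_inversion hR hxp).symm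
    _ ≤ (‖p‖ + ‖x‖) ^ 2 * (1 - ‖inversion p R x‖ ^ 2) := by gcongr
  linarith

lemma one_add_norm_inversion_le (hR : R ^ 2 = ‖p‖ ^ 2 - 1) (hp : 1 < ‖p‖) (hx : ‖x‖ < 1) :
    1 + ‖inversion p R x‖ ≤ (1 + ‖p‖⁻¹) * (1 + ‖x‖) := by
  calc 1 + ‖inversion p R x‖ ≤ 1 + (1 + ‖p‖ * ‖x‖) / (‖p‖ + ‖x‖) := by
        gcongr
        exact norm_inversion_le hR hp hx
    _ = (1 + ‖p‖) * (1 + ‖x‖) / (‖p‖ + ‖x‖) := by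
        field_simp
        ring
    _ ≤ (1 + ‖p‖) * (1 + ‖x‖) / ‖p‖ := by
        gcongr
        exact le_add_of_nonneg_right (norm_nonneg x)
    _ = (1 + ‖p‖⁻¹) * (1 + ‖x‖) := by
        field_simp
        ring

lemma sq_mul_one_sub_norm_le (hR : R ^ 2 = ‖p‖ ^ 2 - 1) (hp : 1 < ‖p‖) (hx : ‖x‖ < 1) :
    R ^ 2 * (1 - ‖x‖) ≤ (1 + ‖p‖⁻¹) * ‖x - p‖ ^ 2 * (1 - ‖inversion p R x‖) := by
  have hxp : x ≠ p := ne_of_apply_ne norm (hx.trans hp).ne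
  have hσ : 0 < 1 - ‖inversion p R x‖ := sub_pos.mpr (norm_inversion_lt_one hR hp hx)
  refine le_of_mul_le_mul_right ?_ (by positivity : 0 < 1 + ‖x‖)
  calc R ^ 2 * (1 - ‖x‖) * (1 + ‖x‖)
      = R ^ 2 * (1 - ‖x‖ ^ 2) := by ring
    _ = ‖x - p‖ ^ 2 * (1 - ‖inversion p R x‖ ^ 2) :=
      (sq_norm_sub_mul_one_sub_sq_norm_inversion hR hxp).symm
    _ = ‖x - p‖ ^ 2 * (1 - ‖inversion p R x‖) * (1 + ‖inversion p R x‖) := by ring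
    _ ≤ ‖x - p‖ ^ 2 * (1 - ‖inversion p R x‖) * ((1 + ‖p‖⁻¹) * (1 + ‖x‖)) := by
      gcongr
      exact one_add_norm_inversion_le hR hp hx
    _ = (1 + ‖p‖⁻¹) * ‖x - p‖ ^ 2 * (1 - ‖inversion p R x‖) * (1 + ‖x‖) := by ring

lemma sq_mul_sqrt_one_sub_norm_mul_le (hR : R ^ 2 = ‖p‖ ^ 2 - 1) (hp : 1 < ‖p‖)
    (hx : ‖x‖ < 1) (hy : ‖y‖ < 1) :
    R ^ 2 * √((1 - ‖x‖) * (1 - ‖y‖)) ≤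
      (1 + ‖p‖⁻¹) * (‖x - p‖ * ‖y - p‖) *
        √((1 - ‖inversion p R x‖) * (1 - ‖inversion p R y‖)) := by
  have hy_scaled : 0 ≤ R ^ 2 * (1 - ‖y‖) := mul_nonneg (sq_nonneg R) (sub_nonneg.mpr hy.le)
  have hσx : 0 ≤ 1 - ‖inversion p R x‖ := sub_nonneg.mpr (norm_inversion_lt_one hR hp hx).le
  calc R ^ 2 * √((1 - ‖x‖) * (1 - ‖y‖))
      = √((R ^ 2 * (1 - ‖x‖)) * (R ^ 2 * (1 - ‖y‖))) := by
        rw [mul_mul_mul_comm, ← sq (R ^ 2), sqrt_mul (sq_nonneg (R ^ 2)),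
          sqrt_sq (sq_nonneg R)]
    _ ≤ √(((1 + ‖p‖⁻¹) * ‖x - p‖ ^ 2 * (1 - ‖inversion p R x‖)) *
          ((1 + ‖p‖⁻¹) * ‖y - p‖ ^ 2 * (1 - ‖inversion p R y‖))) := by
        refine sqrt_le_sqrt (mul_le_mul ?_ ?_ hy_scaled (by positivity))
        · exact sq_mul_one_sub_norm_le hR hp hx
        · exact sq_mul_one_sub_norm_le hR hp hy
    _ = √(((1 + ‖p‖⁻¹) * (‖x - p‖ * ‖y - p‖)) ^ 2 *
          ((1 - ‖inversion p R x‖) * (1 - ‖inversion p R y‖))) := by ring_nf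
    _ = _ := by rw [sqrt_mul (by positivity), sqrt_sq (by positivity)]

lemma norm_inversion_sub_div_sqrt_le (hR : R ^ 2 = ‖p‖ ^ 2 - 1) (hp : 1 < ‖p‖)
    (hx : ‖x‖ < 1) (hy : ‖y‖ < 1) :
    ‖inversion p R x - inversion p R y‖ /
        √((1 - ‖inversion p R x‖) * (1 - ‖inversion p R y‖)) ≤
      (1 + ‖p‖⁻¹) * (‖x - y‖ / √((1 - ‖x‖) * (1 - ‖y‖))) := by
  have hxp : x ≠ p := ne_of_apply_ne norm (hx.trans hp).ne
  have hyp : y ≠ p := ne_of_apply_ne norm (hy.trans hp).ne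
  have hdx : 0 < ‖x - p‖ := norm_pos_iff.mpr (sub_ne_zero.mpr hxp)
  have hdy : 0 < ‖y - p‖ := norm_pos_iff.mpr (sub_ne_zero.mpr hyp)
  have hxy : 0 < √((1 - ‖x‖) * (1 - ‖y‖)) :=
    sqrt_pos.mpr (mul_pos (sub_pos.mpr hx) (sub_pos.mpr hy))
  have hσ : 0 < √((1 - ‖inversion p R x‖) * (1 - ‖inversion p R y‖)) :=
    sqrt_pos.mpr (mul_pos (sub_pos.mpr (norm_inversion_lt_one hR hp hx))
      (sub_pos.mpr (norm_inversion_lt_one hR hp hy)))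
  have hdist : ‖inversion p R x - inversion p R y‖ =
      R ^ 2 / (‖x - p‖ * ‖y - p‖) * ‖x - y‖ := by
    simpa only [dist_eq_norm] using dist_inversion_inversion hxp hyp R
  have hfactor : R ^ 2 / (‖x - p‖ * ‖y - p‖) /
      √((1 - ‖inversion p R x‖) * (1 - ‖inversion p R y‖)) ≤
        (1 + ‖p‖⁻¹) / √((1 - ‖x‖) * (1 - ‖y‖)) := by
    rw [div_div, div_le_div_iff₀ (by positivity) hxy, ← mul_assoc]
    exact sq_mul_sqrt_one_sub_norm_mul_le hR hp hx hy
  rw [hdist, mul_div_right_comm, mul_div_left_comm, mul_comm ‖x - y‖]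
  gcongr

theorem punctured_case_four_bound_general {c : ℝ} (hc : 0 ≤ c) (hR : R ^ 2 = ‖p‖ ^ 2 - 1)
    (hp : 1 < ‖p‖) (hx : ‖x‖ < 1) (hy : ‖y‖ < 1) :
    log (1 + c * ‖inversion p R x - inversion p R y‖ /
        √((1 - ‖inversion p R x‖) * (1 - ‖inversion p R y‖))) ≤
      (1 + ‖p‖⁻¹) * log (1 + c * ‖x - y‖ / √((1 - ‖x‖) * (1 - ‖y‖))) := by
  refine le_trans (log_le_log (by positivity) ?_)
    (log_one_add_mul_le (le_add_of_nonneg_right (by positivity)) (by positivity))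
  rw [mul_div_assoc, mul_div_assoc, mul_left_comm]
  gcongr
  exact norm_inversion_sub_div_sqrt_le hR hp hx hy

end OrthogonalSphere

section UnitBall

variable {n : ℕ} {a p x y : EuclideanSpace ℝ (Fin n)} {c : ℝ}

lemma sigmaInv_eq_inversion (ha : ‖a‖ < 1) (ha0 : a ≠ 0) :
    sigmaInv a = inversion ((‖a‖ ^ 2)⁻¹ • a) √((‖a‖ ^ 2)⁻¹ - 1) := by
  have hr : 0 ≤ (‖a‖ ^ 2)⁻¹ - 1 := sub_nonneg.mpr
    ((one_le_inv₀ (by positivity)).mpr (pow_le_one₀ (norm_nonneg a) ha.le))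
  ext1 x
  rw [inversion, div_pow, sq_sqrt hr, dist_eq_norm, sigmaInv, vsub_eq_sub, vadd_eq_add, add_comm]

lemma hB_sigmaInv_le (hc : 0 ≤ c) (ha : ‖a‖ < 1) (ha0 : a ≠ 0) (hx : ‖x‖ < 1) (hy : ‖y‖ < 1) :
    hB c (sigmaInv a x) (sigmaInv a y) ≤ (1 + ‖a‖) * hB c x y := by
  have ha_pos : 0 < ‖a‖ := norm_pos_iff.mpr ha0
  have hcenter : ‖(‖a‖ ^ 2)⁻¹ • a‖ = ‖a‖⁻¹ := by
    rw [norm_smul, norm_inv, norm_pow, norm_norm]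
    field_simp
  have hp : 1 < ‖(‖a‖ ^ 2)⁻¹ • a‖ := hcenter ▸ (one_lt_inv₀ ha_pos).mpr ha
  have hR : √((‖a‖ ^ 2)⁻¹ - 1) ^ 2 = ‖(‖a‖ ^ 2)⁻¹ • a‖ ^ 2 - 1 := by
    rw [hcenter, ← inv_pow, sq_sqrt (sub_nonneg.mpr (one_le_pow₀ (hcenter ▸ hp.le)))]
  have hbound := punctured_case_four_bound_general hc hR hp hx hy
  rwa [← sigmaInv_eq_inversion ha ha0, hcenter, inv_inv] at hbound

lemma hB_le_hP (hc : 0 ≤ c) (hx : ‖x‖ < 1) (hxp : x ≠ p) (hy : ‖y‖ < 1) (hyp : y ≠ p) :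
    hB c x y ≤ hP c p x y := by
  have hmin {z : EuclideanSpace ℝ (Fin n)} (hz : ‖z‖ < 1) (hzp : z ≠ p) :
      0 < min ‖z - p‖ (1 - ‖z‖) :=
    lt_min (norm_pos_iff.mpr (sub_ne_zero.mpr hzp)) (sub_pos.mpr hz)
  have hminx := hmin hx hxp
  have hminy := hmin hy hyp
  unfold hB hP
  gcongr
  · exact min_le_right _ _
  · exact min_le_right _ _

end UnitBall

theorem punctured_case_four_bound (n : ℕ) (hn : 2 ≤ n)
    (a : EuclideanSpace ℝ (Fin n)) (haB : ‖a‖ < 1) (ha0 : a ≠ 0)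
    (c : ℝ) (hc : 0 < c)
    (x y : EuclideanSpace ℝ (Fin n))
    (hx : ‖x‖ < 1) (hx0 : x ≠ 0) (hy : ‖y‖ < 1) (hy0 : y ≠ 0) :
    Real.log (1 + c * ‖sigmaInv a x - sigmaInv a y‖ /
        Real.sqrt ((1 - ‖sigmaInv a x‖) * (1 - ‖sigmaInv a y‖))) ≤
      (1 + ‖a‖) * hP c 0 x y :=
  (hB_sigmaInv_le hc.le haB ha0 hx hy).trans
    (mul_le_mul_of_nonneg_left (hB_le_hP hc.le hx hx0 hy hy0) (by positivity))
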